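/- arXiv:1905.06408 — 2 statements merged into one kernel-verified Lean document; each statement's English description precedes it below -/
import Mathlib

section
/- Gevrey's composition theorem: Let α ≥ 1 be a real number, V ⊂ ℝ^d and U ⊂ ℝ^e open sets. If f : V → ℝ and g : U → V are Gevrey functions of class α, then the composition f ∘ g : U → ℝ is a Gevrey function of class α. -/
/-!
Gevrey's composition theorem through Faà di Bruno's formula.

On an open set, the bounds on partial derivatives are equivalent, up to the constants, to the bounds
`‖Dⁿ f‖ ≤ (M n! Aⁿ) ^ α` on the norms of the full iterated derivatives
(`Gevrey.exists_norm_le`, and `exists_norm_le_of_gevrey_pi` for vector-valued maps). This uses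
multilinearity and the symmetry of higher derivatives of smooth functions; the latter is
`dirDerivWithin_perm`, obtained by writing a permutation of directions as a product of adjacent
transpositions.

Faà di Bruno's formula expresses `Dⁿ (f ∘ g)` as a sum over the partitions `c` of `n` elements, the
term of a partition into `k` parts of sizes `cᵢ` being bounded by
`(M Bⁿ · k! Xᵏ ∏ cᵢ!) ^ α`, where `X = A N` when `M, A` and `N, B` are the constants of `f` and `g`.
Since `α ≥ 1`, the sum of these powers is at most the power of the sum (`sum_rpow_le_rpow_sum`), and
`∑ k! Xᵏ ∏ cᵢ! ≤ n! (X + 2)ⁿ` by induction on `n` (`sum_orderedFinpartition_le`).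
-/

open Set

noncomputable section

/-- The list of coordinate directions (with multiplicities) associated to a
multi-index `ν ∈ ℕ^d`. -/
def mDirs {d : ℕ} (ν : Fin d → ℕ) : List (Fin d → ℝ) :=
  (List.finRange d).flatMap fun i => List.replicate (ν i) (Pi.single i 1)

/-- The partial derivative `f^{(ν)}` of `f : ℝ^d → ℝ` (computed within the set `U`) at `x`,
realized as the iterated derivative of order `|ν|` in the coordinate directions given by `ν`. -/
def pderivW {d : ℕ} (U : Set (Fin d → ℝ)) (f : (Fin d → ℝ) → ℝ) (ν : Fin d → ℕ)
    (x : Fin d → ℝ) : ℝ :=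
  iteratedFDerivWithin ℝ (∑ i, ν i) f U x (fun j => (mDirs ν).getD (j : ℕ) 0)

/-- `f` is `(A,B,C)`-mild up to order `r` on `U`. -/
def MildUpTo {d : ℕ} (r : ℕ∞) (U : Set (Fin d → ℝ)) (f : (Fin d → ℝ) → ℝ)
    (A B C : ℝ) : Prop :=
  ContDiffOn ℝ r f U ∧ ∀ ν : Fin d → ℕ, (∑ i, ν i : ℕ∞) ≤ r → ∀ x ∈ U,
    |pderivW U f ν x| ≤ B ^ (C + 1) * A ^ (∑ i, ν i) * (Nat.factorial (∑ i, ν i) : ℝ) ^ (C + 1)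

/-- `f` is `(A,B,C)`-mild on `U`. -/
def Mild {d : ℕ} (U : Set (Fin d → ℝ)) (f : (Fin d → ℝ) → ℝ) (A B C : ℝ) : Prop :=
  MildUpTo ⊤ U f A B C

/-- `f` is weakly `(A,B,C)`-mild up to order `r` on `U ⊆ (0,1)^d`. -/
def WeaklyMildUpTo {d : ℕ} (r : ℕ∞) (U : Set (Fin d → ℝ)) (f : (Fin d → ℝ) → ℝ)
    (A B C : ℝ) : Prop :=
  ContDiffOn ℝ r f U ∧ ∀ ν : Fin d → ℕ, (∑ i, ν i : ℕ∞) ≤ r → ∀ x ∈ U,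
    |pderivW U f ν x| ≤
      B ^ (C + 1) * A ^ (∑ i, ν i) * (Nat.factorial (∑ i, ν i) : ℝ) ^ (C + 1) /
        ∏ i, (x i) ^ (ν i)

/-- `f` is weakly `(A,B,C)`-mild on `U`. -/
def WeaklyMild {d : ℕ} (U : Set (Fin d → ℝ)) (f : (Fin d → ℝ) → ℝ) (A B C : ℝ) : Prop :=
  WeaklyMildUpTo ⊤ U f A B C

/-- `f` is a Gevrey function of class `α` on `U`. -/
def Gevrey {d : ℕ} (U : Set (Fin d → ℝ)) (f : (Fin d → ℝ) → ℝ) (α : ℝ) : Prop :=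
  ContDiffOn ℝ (⊤ : ℕ∞) f U ∧ ∃ M R : ℝ, 0 < M ∧ 0 < R ∧ ∀ ν : Fin d → ℕ, ∀ x ∈ U,
    |pderivW U f ν x| ≤ (M * (Nat.factorial (∑ i, ν i) : ℝ) / R ^ (∑ i, ν i)) ^ α

/-! ### Symmetry of higher derivatives -/

/-- The iterated directional derivative of `f` within `U` along a list of vectors; the head of the
list is the direction differentiated last. -/
def dirDerivWithin {d : ℕ} (U : Set (Fin d → ℝ)) (f : (Fin d → ℝ) → ℝ) :
    List (Fin d → ℝ) → (Fin d → ℝ) → ℝ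
  | [] => f
  | v :: l => fun x => fderivWithin ℝ (dirDerivWithin U f l) U x v

lemma contDiffOn_dirDerivWithin {d : ℕ} {U : Set (Fin d → ℝ)} (hU : IsOpen U)
    {f : (Fin d → ℝ) → ℝ} (hf : ContDiffOn ℝ (⊤ : ℕ∞) f U) (l : List (Fin d → ℝ)) :
    ContDiffOn ℝ (⊤ : ℕ∞) (dirDerivWithin U f l) U := by
  induction l with
  | nil => exact hf
  | cons v l ih =>
    exact (ih.fderivWithin hU.uniqueDiffOn (m := (⊤ : ℕ∞)) (by simp)).clm_apply contDiffOn_const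

/-- Iterated directional derivatives of a smooth function do not depend on the order of the
directions. The transposition step is the symmetry of the second derivative. -/
lemma dirDerivWithin_perm {d : ℕ} {U : Set (Fin d → ℝ)} (hU : IsOpen U)
    {f : (Fin d → ℝ) → ℝ} (hf : ContDiffOn ℝ (⊤ : ℕ∞) f U) {l l' : List (Fin d → ℝ)}
    (h : l.Perm l') : ∀ x ∈ U, dirDerivWithin U f l x = dirDerivWithin U f l' x := by
  induction h with
  | nil => intro x _; rfl
  | cons v _ ih =>
    intro x hx
    simp only [dirDerivWithin]
    rw [fderivWithin_congr (fun y hy => ih y hy) (ih x hx)]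
  | trans _ _ ih1 ih2 => intro x hx; rw [ih1 x hx, ih2 x hx]
  | swap v w l =>
    intro x hx
    have hs := contDiffOn_dirDerivWithin hU hf l
    have hd : DifferentiableWithinAt ℝ (fderivWithin ℝ (dirDerivWithin U f l) U) U x :=
      (hs.fderivWithin hU.uniqueDiffOn (m := (⊤ : ℕ∞)) (by simp)).differentiableOn (by simp) x hx
    have hsymm : IsSymmSndFDerivWithinAt ℝ (dirDerivWithin U f l) U x :=
      (hs x hx).isSymmSndFDerivWithinAt (by
        rw [minSmoothness_of_isRCLikeNormedField]
        exact WithTop.coe_le_coe.2 le_top) hU.uniqueDiffOn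
        (by rw [hU.interior_eq]; exact subset_closure hx) hx
    have key : ∀ a b : Fin d → ℝ, dirDerivWithin U f (a :: b :: l) x =
        fderivWithin ℝ (fderivWithin ℝ (dirDerivWithin U f l) U) U x a b := by
      intro a b
      simp only [dirDerivWithin]
      rw [fderivWithin_clm_apply (hU.uniqueDiffOn x hx) hd (differentiableWithinAt_const _)]
      simp
    rw [key, key, hsymm]

lemma iteratedFDerivWithin_eq_dirDerivWithin {d : ℕ} {U : Set (Fin d → ℝ)} (hU : IsOpen U)
    {f : (Fin d → ℝ) → ℝ} (hf : ContDiffOn ℝ (⊤ : ℕ∞) f U) (n : ℕ) :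
    ∀ x ∈ U, ∀ v : Fin n → (Fin d → ℝ),
      iteratedFDerivWithin ℝ n f U x v = dirDerivWithin U f (List.ofFn v) x := by
  induction n with
  | zero => intro x _ v; simp [dirDerivWithin]
  | succ n ih =>
    intro x hx v
    rw [iteratedFDerivWithin_succ_apply_left, List.ofFn_succ]
    have hd : DifferentiableWithinAt ℝ (iteratedFDerivWithin ℝ n f U) U x :=
      hf.differentiableOn_iteratedFDerivWithin (by exact_mod_cast ENat.natCast_lt_top n)
        hU.uniqueDiffOn x hx
    change _ = fderivWithin ℝ (dirDerivWithin U f (List.ofFn (Fin.tail v))) U x (v 0)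
    rw [fderivWithin_congr (fun y hy => (ih y hy (Fin.tail v)).symm) (ih x hx (Fin.tail v)).symm,
      fderivWithin_continuousMultilinear_apply_const_apply (hU.uniqueDiffOn x hx) hd]

/-! ### From partial derivatives to operator norms -/

lemma length_mDirs {d : ℕ} (ν : Fin d → ℕ) : (mDirs ν).length = ∑ i, ν i := by
  simp [mDirs, List.length_flatMap, Fin.sum_univ_def]

lemma pderivW_eq_dirDerivWithin {d : ℕ} {U : Set (Fin d → ℝ)} (hU : IsOpen U)
    {f : (Fin d → ℝ) → ℝ} (hf : ContDiffOn ℝ (⊤ : ℕ∞) f U) (ν : Fin d → ℕ)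
    {x : Fin d → ℝ} (hx : x ∈ U) : pderivW U f ν x = dirDerivWithin U f (mDirs ν) x := by
  rw [pderivW, iteratedFDerivWithin_eq_dirDerivWithin hU hf _ x hx]
  congr 1
  apply List.ext_getElem
  · simp [length_mDirs]
  · intro i h1 h2
    simp [h2]

/-- A list of coordinate directions is a reordering of the one attached to the multi-index
counting how often each coordinate occurs. -/
lemma mDirs_count_perm {d n : ℕ} (r : Fin n → Fin d) :
    (mDirs fun i => (List.ofFn r).count i).Perm
      (List.ofFn fun j => (Pi.single (r j) 1 : Fin d → ℝ)) := by
  have h : ((List.finRange d).flatMap fun i => List.replicate ((List.ofFn r).count i) i).Perm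
      (List.ofFn r) := by
    rw [List.perm_iff_count]
    intro a
    rw [List.count_flatMap]
    simp only [Function.comp_def, List.count_replicate]
    rw [← Fin.sum_univ_def]
    simp
  have h2 := h.map (fun i => (Pi.single i 1 : Fin d → ℝ))
  simpa [mDirs, List.map_flatMap, List.map_replicate, List.map_ofFn, Function.comp_def] using h2

lemma norm_iteratedFDerivWithin_le {d n : ℕ} {U : Set (Fin d → ℝ)} (hU : IsOpen U)
    {f : (Fin d → ℝ) → ℝ} (hf : ContDiffOn ℝ (⊤ : ℕ∞) f U) {x : Fin d → ℝ} (hx : x ∈ U)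
    {B : ℝ} (hB0 : 0 ≤ B) (hB : ∀ ν : Fin d → ℕ, ∑ i, ν i = n → |pderivW U f ν x| ≤ B) :
    ‖iteratedFDerivWithin ℝ n f U x‖ ≤ (d : ℝ) ^ n * B := by
  have hbasis : ∀ r : Fin n → Fin d,
      |iteratedFDerivWithin ℝ n f U x fun j => Pi.single (r j) 1| ≤ B := by
    intro r
    rw [iteratedFDerivWithin_eq_dirDerivWithin hU hf _ x hx,
      ← dirDerivWithin_perm hU hf (mDirs_count_perm r) x hx, ← pderivW_eq_dirDerivWithin hU hf _ hx]
    apply hB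
    rw [← length_mDirs, (mDirs_count_perm r).length_eq, List.length_ofFn]
  refine ContinuousMultilinearMap.opNorm_le_bound (by positivity) fun m => ?_
  have hm : m = fun i => ∑ j, m i j • (Pi.single j 1 : Fin d → ℝ) := by
    funext i
    exact pi_eq_sum_univ' (m i)
  conv_lhs => rw [hm]
  rw [ContinuousMultilinearMap.map_sum]
  calc _ ≤ ∑ r : Fin n → Fin d, B * ∏ i, ‖m i‖ := by
        refine norm_sum_le_of_le _ fun r _ => ?_
        rw [ContinuousMultilinearMap.map_smul_univ, norm_smul, norm_prod, mul_comm]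
        gcongr with i
        · exact hbasis r
        · exact norm_le_pi_norm (m i) (r i)
    _ = _ := by simp [mul_assoc]

/-- A Gevrey bound on the partial derivatives gives one on the norms of the full iterated
derivatives: the factor `d ^ n` is absorbed in the geometric part because `α ≥ 1`. -/
lemma Gevrey.exists_norm_le {d : ℕ} {U : Set (Fin d → ℝ)} (hU : IsOpen U)
    {f : (Fin d → ℝ) → ℝ} {α : ℝ} (hα : 1 ≤ α) (hf : Gevrey U f α) :
    ∃ M A : ℝ, 0 < M ∧ 0 < A ∧ ∀ n : ℕ, ∀ x ∈ U,
      ‖iteratedFDerivWithin ℝ n f U x‖ ≤ (M * (n.factorial : ℝ) * A ^ n) ^ α := by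
  obtain ⟨hs, M, R, hM, hR, h⟩ := hf
  refine ⟨M, (d + 1) / R, hM, by positivity, fun n x hx => ?_⟩
  have h1 := norm_iteratedFDerivWithin_le (n := n) hU hs hx
    (B := (M * (n.factorial : ℝ) / R ^ n) ^ α) (by positivity)
    (by rintro ν rfl; exact h ν x hx)
  refine h1.trans ?_
  have h2 : (d : ℝ) ^ n ≤ (((d : ℝ) + 1) ^ n) ^ α := by
    calc (d : ℝ) ^ n ≤ ((d : ℝ) + 1) ^ n := by gcongr; linarith
      _ ≤ _ := Real.self_le_rpow_of_one_le (one_le_pow₀ (by simp)) hα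
  calc _ ≤ (((d : ℝ) + 1) ^ n) ^ α * (M * (n.factorial : ℝ) / R ^ n) ^ α := by gcongr
    _ = _ := by
      rw [← Real.mul_rpow (by positivity) (by positivity)]
      congr 1
      rw [div_pow]
      ring

/-- Componentwise Gevrey bounds with constants depending on the component give a common bound for
a vector-valued map. -/
lemma exists_norm_le_of_gevrey_pi {d e : ℕ} {U : Set (Fin e → ℝ)} (hU : IsOpen U)
    {g : (Fin e → ℝ) → (Fin d → ℝ)} {α : ℝ} (hα : 1 ≤ α)
    (hg : ∀ i : Fin d, Gevrey U (fun x => g x i) α) :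
    ∃ M A : ℝ, 0 < M ∧ 0 < A ∧ ∀ n : ℕ, ∀ x ∈ U,
      ‖iteratedFDerivWithin ℝ n g U x‖ ≤ (M * (n.factorial : ℝ) * A ^ n) ^ α := by
  have hs : ContDiffOn ℝ (⊤ : ℕ∞) g U := contDiffOn_pi.2 fun i => (hg i).1
  choose M A hM hA h using fun i => (hg i).exists_norm_le hU hα
  have hM0 : 0 ≤ ∑ i, M i := Finset.sum_nonneg fun i _ => (hM i).le
  have hA0 : 0 ≤ ∑ i, A i := Finset.sum_nonneg fun i _ => (hA i).le
  refine ⟨∑ i, M i + 1, ∑ i, A i + 1, by positivity, by positivity, fun n x hx => ?_⟩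
  refine ContinuousMultilinearMap.opNorm_le_bound (by positivity) fun m => ?_
  rw [pi_norm_le_iff_of_nonneg (by positivity)]
  intro i
  have h1 : iteratedFDerivWithin ℝ n g U x m i
      = iteratedFDerivWithin ℝ n (fun x => g x i) U x m := by
    have := (ContinuousLinearMap.proj (R := ℝ) (φ := fun _ : Fin d => ℝ)
      i).iteratedFDerivWithin_comp_left (hs x hx) hU.uniqueDiffOn hx (i := n)
      (by exact_mod_cast le_top)
    have h2 := congrArg (fun T => T m) this
    exact h2.symm
  rw [h1]
  refine (ContinuousMultilinearMap.le_opNorm _ m).trans ?_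
  have hMi : M i ≤ ∑ i, M i + 1 :=
    (Finset.single_le_sum (fun i _ => (hM i).le) (Finset.mem_univ i)).trans (by linarith)
  have hAi : A i ≤ ∑ i, A i + 1 :=
    (Finset.single_le_sum (fun i _ => (hA i).le) (Finset.mem_univ i)).trans (by linarith)
  have hMp := (hM i).le
  have hAp := (hA i).le
  gcongr
  refine (h i n x hx).trans ?_
  gcongr

/-! ### Estimates for the sum in Faà di Bruno's formula -/

/-- The combinatorial estimate behind the composition theorem. Extending a partition `c` of `n`
into `k` parts to one of `n + 1` either adds a singleton part, multiplying the weight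
`k! X ^ k ∏ cᵢ!` by `(k + 1) X`, or enlarges a part, multiplying it by `cᵢ + 1`; the sum of these
factors is `(k + 1) X + n + k ≤ (n + 1) (X + 2)`. -/
lemma sum_orderedFinpartition_le {X : ℝ} (hX : 0 ≤ X) (n : ℕ) :
    ∑ c : OrderedFinpartition n,
      ((c.length.factorial : ℝ) * X ^ c.length * ∏ i, ((c.partSize i).factorial : ℝ))
      ≤ (n.factorial : ℝ) * (X + 2) ^ n := by
  induction n with
  | zero =>
    simp [default, OrderedFinpartition.atomic]
  | succ n ih =>
    rw [← (OrderedFinpartition.extendEquiv n).sum_comp, Fintype.sum_sigma]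
    have step : ∀ c : OrderedFinpartition n,
        ∑ o : Option (Fin c.length),
          ((((c.extend o).length.factorial : ℝ) * X ^ (c.extend o).length *
            ∏ i, (((c.extend o).partSize i).factorial : ℝ)))
        ≤ ((n + 1 : ℕ) * (X + 2)) * ((c.length.factorial : ℝ) * X ^ c.length *
            ∏ i, ((c.partSize i).factorial : ℝ)) := by
      intro c
      set P := ∏ i, ((c.partSize i).factorial : ℝ) with hP
      have hP0 : 0 ≤ P := by positivity
      have hleft : ∏ i, ((c.extendLeft.partSize i).factorial : ℝ) = P := by
        change ∏ i : Fin (c.length + 1),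
          (((Fin.cons 1 c.partSize : Fin (c.length + 1) → ℕ) i).factorial : ℝ) = P
        simp [Fin.prod_univ_succ, hP]
      have hmid : ∀ k, ∏ i, (((c.extendMiddle k).partSize i).factorial : ℝ)
          = ((c.partSize k : ℝ) + 1) * P := by
        intro k
        change ∏ i : Fin c.length,
          ((Function.update c.partSize k (c.partSize k + 1) i).factorial : ℝ) = _
        rw [hP, ← Finset.mul_prod_erase _ _ (Finset.mem_univ k),
          ← Finset.mul_prod_erase _ (fun i => ((c.partSize i).factorial : ℝ)) (Finset.mem_univ k)]
        rw [Finset.prod_congr rfl (g := fun i => ((c.partSize i).factorial : ℝ))]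
        · simp [Nat.factorial_succ, mul_assoc]
        · intro i hi
          rw [Function.update_of_ne (Finset.ne_of_mem_erase hi)]
      have hsum : ∑ k, (c.partSize k : ℝ) = n := by
        have := c.sum_sigma_eq_sum (fun _ => (1 : ℝ))
        simpa using this
      rw [Fintype.sum_option]
      change (((c.length + 1).factorial : ℝ) * X ^ (c.length + 1) *
          ∏ i, ((c.extendLeft.partSize i).factorial : ℝ)) +
        ∑ k, ((c.length.factorial : ℝ) * X ^ c.length *
          ∏ i, (((c.extendMiddle k).partSize i).factorial : ℝ)) ≤ _
      simp only [hleft, hmid]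
      rw [← Finset.mul_sum, ← Finset.sum_mul, Finset.sum_add_distrib, hsum]
      have hk : (c.length : ℝ) ≤ n := by exact_mod_cast c.length_le
      have hW : 0 ≤ (c.length.factorial : ℝ) * X ^ c.length * P := by positivity
      have : ((c.length : ℝ) + 1) * X + (n + c.length) ≤ (n + 1 : ℕ) * (X + 2) := by
        push_cast
        nlinarith
      refine le_trans (le_of_eq ?_) (mul_le_mul_of_nonneg_right this hW)
      simp [Nat.factorial_succ, pow_succ]
      ring
    refine (Finset.sum_le_sum fun c _ => step c).trans ?_
    rw [← Finset.mul_sum]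
    calc _ ≤ ((n + 1 : ℕ) * (X + 2)) * ((n.factorial : ℝ) * (X + 2) ^ n) := by gcongr
      _ = _ := by rw [Nat.factorial_succ]; push_cast; ring

/-- Superadditivity of `t ↦ t ^ α` on the nonnegative reals for `α ≥ 1`. -/
lemma sum_rpow_le_rpow_sum {ι : Type*} (s : Finset ι) {w : ι → ℝ} (hw : ∀ i, 0 ≤ w i) {α : ℝ}
    (hα : 1 ≤ α) : ∑ i ∈ s, w i ^ α ≤ (∑ i ∈ s, w i) ^ α := by
  classical
  induction s using Finset.induction_on with
  | empty => simp [Real.zero_rpow (by linarith : α ≠ 0)]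
  | insert a s ha ih =>
    rw [Finset.sum_insert ha, Finset.sum_insert ha]
    have h := Real.add_rpow_le_rpow_add (hw a) (Finset.sum_nonneg fun i (_ : i ∈ s) => hw i) hα
    linarith

/-! ### The composition theorem -/

/-- Gevrey's composition theorem: the composition of Gevrey functions of
class `α ≥ 1` is again a Gevrey function of class `α`. -/
theorem gevrey_comp {d e : ℕ} (α : ℝ) (hα : 1 ≤ α)
    (V : Set (Fin d → ℝ)) (hV : IsOpen V) (U : Set (Fin e → ℝ)) (hU : IsOpen U)
    (f : (Fin d → ℝ) → ℝ) (g : (Fin e → ℝ) → (Fin d → ℝ)) (hgU : Set.MapsTo g U V)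
    (hf : Gevrey V f α) (hg : ∀ i : Fin d, Gevrey U (fun x => g x i) α) :
    Gevrey U (f ∘ g) α := by
  have hgs : ContDiffOn ℝ (⊤ : ℕ∞) g U := contDiffOn_pi.2 fun i => (hg i).1
  obtain ⟨M, A, hM, hA, hfb⟩ := hf.exists_norm_le hV hα
  obtain ⟨N, B, hN, hB, hgb⟩ := exists_norm_le_of_gevrey_pi hU hα hg
  -- `X` collects the factors occurring once for each part of a partition.
  set X : ℝ := A * N with hX
  have hX0 : 0 < X := by positivity
  refine ⟨hf.1.comp hgs hgU, M, (B * (X + 2))⁻¹, hM, by positivity, fun ν x hx => ?_⟩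
  set n := ∑ i, ν i with hn
  have hnorm : ‖iteratedFDerivWithin ℝ n (f ∘ g) U x‖
      ≤ (M * (n.factorial : ℝ) / ((B * (X + 2))⁻¹) ^ n) ^ α := by
    have hT := (hf.1.ftaylorSeriesWithin hV.uniqueDiffOn).comp
      (hgs.ftaylorSeriesWithin hU.uniqueDiffOn) hgU
    rw [← hT.eq_iteratedFDerivWithin_of_uniqueDiffOn (m := n) (by exact_mod_cast le_top)
      hU.uniqueDiffOn hx]
    have hterm : ∀ c : OrderedFinpartition n,
        ‖(ftaylorSeriesWithin ℝ f V (g x)).compAlongOrderedFinpartition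
          (ftaylorSeriesWithin ℝ g U x) c‖ ≤
        (M * B ^ n * ((c.length.factorial : ℝ) * X ^ c.length *
          ∏ i, ((c.partSize i).factorial : ℝ))) ^ α := by
      intro c
      refine (c.norm_compAlongOrderedFinpartition_le _ _).trans ?_
      have h1 := hfb c.length (g x) (hgU hx)
      have hsum : ∑ k, c.partSize k = n := by
        have := c.sum_sigma_eq_sum (fun _ => 1)
        simpa using this
      calc _ ≤ (M * (c.length.factorial : ℝ) * A ^ c.length) ^ α *
            ∏ i, (N * ((c.partSize i).factorial : ℝ) * B ^ c.partSize i) ^ α := by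
            gcongr with i
            · exact h1
            · exact hgb (c.partSize i) x hx
        _ = _ := by
          rw [Real.finsetProd_rpow _ _ (fun i _ => by positivity),
            ← Real.mul_rpow (by positivity) (by positivity)]
          congr 1
          rw [Finset.prod_mul_distrib, Finset.prod_mul_distrib, Finset.prod_pow_eq_pow_sum, hsum,
            Finset.prod_const, Finset.card_univ, Fintype.card_fin, hX, mul_pow]
          ring
    calc ‖∑ c : OrderedFinpartition n,
          (ftaylorSeriesWithin ℝ f V (g x)).compAlongOrderedFinpartition
            (ftaylorSeriesWithin ℝ g U x) c‖
        ≤ ∑ c : OrderedFinpartition n, (M * B ^ n * ((c.length.factorial : ℝ) * X ^ c.length *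
            ∏ i, ((c.partSize i).factorial : ℝ))) ^ α :=
          norm_sum_le_of_le (Finset.univ : Finset (OrderedFinpartition n)) fun c _ => hterm c
      _ ≤ (∑ c : OrderedFinpartition n, M * B ^ n * ((c.length.factorial : ℝ) * X ^ c.length *
            ∏ i, ((c.partSize i).factorial : ℝ))) ^ α :=
          sum_rpow_le_rpow_sum _ (fun c => by positivity) hα
      _ = (M * B ^ n * ∑ c : OrderedFinpartition n, ((c.length.factorial : ℝ) * X ^ c.length *
            ∏ i, ((c.partSize i).factorial : ℝ))) ^ α := by rw [← Finset.mul_sum]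
      _ ≤ _ := by
          have h2 := sum_orderedFinpartition_le hX0.le n
          refine Real.rpow_le_rpow (by positivity) ?_ (by linarith)
          calc _ ≤ M * B ^ n * ((n.factorial : ℝ) * (X + 2) ^ n) := by gcongr
            _ = _ := by
              rw [inv_pow, div_inv_eq_mul, mul_pow]
              ring
  -- Coordinate directions are unit vectors, so a partial derivative is at most the operator norm.
  refine le_trans ?_ hnorm
  refine ((iteratedFDerivWithin ℝ n (f ∘ g) U x).le_opNorm
    fun j => (mDirs ν).getD (j : ℕ) 0).trans ?_
  refine mul_le_of_le_one_right (norm_nonneg _) (Finset.prod_le_one (fun _ _ => norm_nonneg _) ?_)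
  intro j _
  have hj : (j : ℕ) < (mDirs ν).length := by rw [length_mDirs]; exact j.2
  rw [List.getD_eq_getElem _ _ hj]
  have hmem := List.getElem_mem hj
  obtain ⟨i, -, hi⟩ := List.mem_flatMap.1 hmem
  rw [List.eq_of_mem_replicate hi]
  rw [pi_norm_le_iff_of_nonneg zero_le_one]
  intro k
  rcases eq_or_ne k i with rfl | hk
  · simp
  · simp [hk]
end
end

section
/- Product of weakly mild functions: Let r be a positive integer or +∞ and suppose f_1,…,f_l : U → ℝ, with U ⊂ (0,1)^d open, are each weakly (A,B,C)-mild up to order r for some A,B > 0 and C ≥ 0. Then the pointwise product f_1⋯f_l is weakly (lA, B^l, C)-mild up to order r. -/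
/-!
By the Leibniz rule, a derivative of order `n` of `f₁ ⋯ f_l` is a sum over the `l ^ n` ways of
assigning each of the `n` differentiations to one of the factors. If the factor `f_c` receives
`n_c` of them, the corresponding term is at most
`B ^ (l * (C + 1)) * A ^ n * (∏ n_c!) ^ (C + 1) / x ^ ν`, and `∏ n_c! ≤ n!` because a multinomial
coefficient is a positive integer.

A multi-index is encoded as a nondecreasing word of coordinates (`mWord`), and `wDeriv` is the
derivative along a word. The differentiations that one factor receives form a subword, which is
again nondecreasing and hence comes from a multi-index (`mWord_count`); so no symmetry of higher
derivatives is needed. `abs_wDeriv_prod_le` is the Leibniz expansion with its bound, and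
`prod_mild_le` bounds a single term.
-/

open Set

noncomputable section

/-- The nondecreasing word in the letters `0, …, d - 1` in which the letter `i` occurs `ν i` times. -/
def mWord {d : ℕ} (ν : Fin d → ℕ) : List (Fin d) :=
  (List.finRange d).flatMap fun i => List.replicate (ν i) i

lemma mDirs_eq_map {d : ℕ} (ν : Fin d → ℕ) :
    mDirs ν = (mWord ν).map fun i => (Pi.single i 1 : Fin d → ℝ) := by
  simp [mDirs, mWord, List.map_flatMap]

lemma length_mWord {d : ℕ} (ν : Fin d → ℕ) : (mWord ν).length = ∑ i, ν i := by
  simp only [mWord, List.length_flatMap, List.length_replicate]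
  rw [← List.ofFn_eq_map, List.sum_ofFn]

lemma prod_mWord {d : ℕ} (ν : Fin d → ℕ) (x : Fin d → ℝ) :
    ((mWord ν).map x).prod = ∏ i, x i ^ ν i := by
  have h : ∀ L : List (Fin d), ((L.flatMap fun i => List.replicate (ν i) i).map x).prod
      = (L.map fun i => x i ^ ν i).prod := by
    intro L
    induction L with
    | nil => simp
    | cons a L ih => simp [ih]
  rw [mWord, h, ← List.ofFn_eq_map, List.prod_ofFn]

lemma mWord_pairwise {d : ℕ} (ν : Fin d → ℕ) : (mWord ν).Pairwise (· ≤ ·) := by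
  rw [mWord, List.pairwise_flatMap]
  refine ⟨fun a _ => by simp [List.pairwise_replicate], ?_⟩
  refine (List.pairwise_le_finRange d).imp ?_
  intro a b hab x hx y hy
  rw [List.eq_of_mem_replicate hx, List.eq_of_mem_replicate hy]
  exact hab

/-- A nondecreasing word is determined by how often each letter occurs in it. -/
lemma mWord_count {d : ℕ} {u : List (Fin d)} (hu : u.Pairwise (· ≤ ·)) :
    mWord (fun i => u.count i) = u := by
  refine List.Perm.eq_of_pairwise' (mWord_pairwise _) hu ?_
  rw [List.perm_iff_count]
  intro a
  simp only [mWord, List.count_flatMap, Function.comp_def, List.count_replicate]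
  rw [← List.ofFn_eq_map, List.sum_ofFn]
  simp

/-- The iterated partial derivative of `f` within `U` along a word of coordinates;
the last letter of the word is differentiated first. -/
def wDeriv {d : ℕ} (U : Set (Fin d → ℝ)) :
    List (Fin d) → ((Fin d → ℝ) → ℝ) → (Fin d → ℝ) → ℝ
  | [], f => f
  | i :: w, f => fun x => fderivWithin ℝ (wDeriv U w f) U x (Pi.single i 1)

lemma wDeriv_append {d : ℕ} (U : Set (Fin d → ℝ)) (w v : List (Fin d))
    (f : (Fin d → ℝ) → ℝ) : wDeriv U (w ++ v) f = wDeriv U w (wDeriv U v f) := by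
  induction w with
  | nil => rfl
  | cons i w ih => simp only [List.cons_append, wDeriv, ih]

lemma wDeriv_congr {d : ℕ} {U : Set (Fin d → ℝ)} (w : List (Fin d))
    {f g : (Fin d → ℝ) → ℝ} (h : EqOn f g U) : EqOn (wDeriv U w f) (wDeriv U w g) U := by
  induction w with
  | nil => exact h
  | cons i w ih =>
    intro x hx
    simp only [wDeriv]
    rw [fderivWithin_congr ih (ih hx)]

lemma wDeriv_contDiffOn {d : ℕ} {U : Set (Fin d → ℝ)} (hU : IsOpen U) (w : List (Fin d))
    {f : (Fin d → ℝ) → ℝ} {k : ℕ} (hf : ContDiffOn ℝ ((k + w.length : ℕ)) f U) :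
    ContDiffOn ℝ k (wDeriv U w f) U := by
  induction w generalizing k with
  | nil => simpa [wDeriv] using hf
  | cons i w ih =>
    have h : ContDiffOn ℝ ((k + 1 : ℕ)) (wDeriv U w f) U := by
      apply ih
      convert hf using 2
      simp only [List.length_cons]
      omega
    exact (h.fderivWithin hU.uniqueDiffOn (by norm_cast)).clm_apply contDiffOn_const

lemma wDeriv_sum {d : ℕ} {U : Set (Fin d → ℝ)} (hU : IsOpen U) (w : List (Fin d))
    {ι : Type*} (s : Finset ι) {f : ι → (Fin d → ℝ) → ℝ}
    (hf : ∀ c ∈ s, ContDiffOn ℝ (w.length) (f c) U) :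
    EqOn (wDeriv U w fun y => ∑ c ∈ s, f c y) (fun y => ∑ c ∈ s, wDeriv U w (f c) y) U := by
  induction w with
  | nil => intro x _; rfl
  | cons i w ih =>
    intro x hx
    have h := ih fun c hc => (hf c hc).of_le (by simp)
    simp only [wDeriv]
    rw [fderivWithin_congr h (h hx), fderivWithin_fun_sum (hU.uniqueDiffOn x hx)]
    · simp
    · intro c hc
      have h1 : ContDiffOn ℝ (1 : ℕ) (wDeriv U w (f c)) U :=
        wDeriv_contDiffOn hU w (by convert hf c hc using 2; simp [add_comm])
      exact (h1.differentiableOn (by simp)) x hx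

lemma iteratedFDerivWithin_eq_wDeriv {d : ℕ} {U : Set (Fin d → ℝ)} (hU : IsOpen U)
    (w : List (Fin d)) {f : (Fin d → ℝ) → ℝ} (hf : ContDiffOn ℝ (w.length) f U)
    {x : Fin d → ℝ} (hx : x ∈ U) :
    iteratedFDerivWithin ℝ w.length f U x
      (fun j => (w.map fun i => (Pi.single i 1 : Fin d → ℝ)).getD (j : ℕ) 0)
      = wDeriv U w f x := by
  induction w generalizing x with
  | nil => simp [wDeriv]
  | cons i w ih =>
    have h : EqOn (fun y => iteratedFDerivWithin ℝ w.length f U y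
        (fun j => (w.map fun i => (Pi.single i 1 : Fin d → ℝ)).getD (j : ℕ) 0))
        (wDeriv U w f) U :=
      fun y hy => ih (hf.of_le (by simp)) hy
    simp only [wDeriv]
    rw [← fderivWithin_congr h (h hx)]
    have hd : DifferentiableWithinAt ℝ (iteratedFDerivWithin ℝ w.length f U) U x :=
      hf.differentiableOn_iteratedFDerivWithin (by norm_cast; simp) hU.uniqueDiffOn x hx
    rw [fderivWithin_continuousMultilinear_apply_const_apply (hU.uniqueDiffOn x hx) hd]
    simp only [List.length_cons]
    rw [iteratedFDerivWithin_succ_apply_left]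
    rfl

lemma pderivW_eq_wDeriv {d : ℕ} {U : Set (Fin d → ℝ)} (hU : IsOpen U) (ν : Fin d → ℕ)
    {f : (Fin d → ℝ) → ℝ} (hf : ContDiffOn ℝ ((∑ i, ν i : ℕ)) f U)
    {x : Fin d → ℝ} (hx : x ∈ U) : pderivW U f ν x = wDeriv U (mWord ν) f x := by
  rw [pderivW, mDirs_eq_map]
  rw [← length_mWord] at hf ⊢
  exact iteratedFDerivWithin_eq_wDeriv hU _ hf hx

/-- One step of the Leibniz rule: the new letter is put in front of the word of each factor in
turn. -/
lemma fderivWithin_prod_wDeriv {d l : ℕ} {U : Set (Fin d → ℝ)} (hU : IsOpen U)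
    (f : Fin l → (Fin d → ℝ) → ℝ) (u : Fin l → List (Fin d)) (i : Fin d)
    {x : Fin d → ℝ} (hx : x ∈ U)
    (hd : ∀ c, DifferentiableWithinAt ℝ (wDeriv U (u c) (f c)) U x) :
    wDeriv U [i] (fun y => ∏ c, wDeriv U (u c) (f c) y) x
      = ∑ c, ∏ b, wDeriv U (Function.update u c (i :: u c) b) (f b) x := by
  simp only [wDeriv]
  rw [fderivWithin_finsetProd (hU.uniqueDiffOn x hx) fun c _ => hd c]
  rw [sum_apply]
  refine Finset.sum_congr rfl fun c _ => ?_
  rw [← Finset.prod_erase_mul _ _ (Finset.mem_univ c), smul_apply, smul_eq_mul]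
  congr 1
  · refine Finset.prod_congr rfl fun b hb => ?_
    rw [Function.update_of_ne (Finset.ne_of_mem_erase hb)]
  · simp [wDeriv]

lemma sum_length_update {d l : ℕ} (u : Fin l → List (Fin d)) (c : Fin l) (i : Fin d) :
    ∑ b, (Function.update u c (i :: u c) b).length = ∑ b, (u b).length + 1 := by
  rw [← Finset.sum_erase_add _ _ (Finset.mem_univ c),
    ← Finset.sum_erase_add Finset.univ (fun b => (u b).length) (Finset.mem_univ c),
    Finset.sum_congr rfl fun b hb => by rw [Function.update_of_ne (Finset.ne_of_mem_erase hb)]]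
  simp [add_assoc]

lemma prod_prod_update {d l : ℕ} (u : Fin l → List (Fin d)) (c : Fin l) (i : Fin d)
    (x : Fin d → ℝ) :
    ∏ b, ((Function.update u c (i :: u c) b).map x).prod
      = x i * ∏ b, ((u b).map x).prod := by
  rw [← Finset.prod_erase_mul _ _ (Finset.mem_univ c),
    ← Finset.prod_erase_mul Finset.univ (fun b => ((u b).map x).prod) (Finset.mem_univ c),
    Finset.prod_congr rfl fun b hb => by rw [Function.update_of_ne (Finset.ne_of_mem_erase hb)]]
  simp only [Function.update_self, List.map_cons, List.prod_cons]
  ring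

/-- Bound for a single term of the Leibniz expansion: the factorials of the orders multiply
to at most the factorial of the total order. -/
lemma prod_mild_le {l : ℕ} {K A C : ℝ} (hK : 0 ≤ K) (hA : 0 ≤ A) (hC : 0 ≤ C)
    (n : Fin l → ℕ) (P g : Fin l → ℝ) (hP : ∀ c, 0 < P c)
    (hg : ∀ c, |g c| ≤ K * A ^ n c * ((n c).factorial : ℝ) ^ (C + 1) / P c) :
    |∏ c, g c| ≤ K ^ l * A ^ (∑ c, n c) * ((∑ c, n c).factorial : ℝ) ^ (C + 1) / ∏ c, P c := by
  rw [Finset.abs_prod]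
  refine (Finset.prod_le_prod (fun c _ => abs_nonneg _) fun c _ => hg c).trans ?_
  rw [Finset.prod_div_distrib, Finset.prod_mul_distrib, Finset.prod_mul_distrib,
    Finset.prod_pow_eq_pow_sum, Real.finsetProd_rpow _ _ fun c _ => by positivity]
  have hPpos : 0 < ∏ c, P c := Finset.prod_pos fun c _ => hP c
  have hfac : (∏ c, ((n c).factorial : ℝ)) ≤ ((∑ c, n c).factorial : ℝ) := by
    exact_mod_cast Nat.le_of_dvd (Nat.factorial_pos _)
      (Nat.prod_factorial_dvd_factorial_sum Finset.univ n)
  have hpow := Real.rpow_le_rpow (Finset.prod_nonneg fun c _ => by positivity) hfac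
    (by linarith : (0 : ℝ) ≤ C + 1)
  simp only [Finset.prod_const, Finset.card_univ, Fintype.card_fin]
  gcongr

/-- The bound for `w`-derivatives of a product of already differentiated factors. Induction on `w`
from its last letter: each letter turns the product into a sum of `l` products of the same kind,
so after `|w|` steps there are `l ^ |w|` of them. Since `w ++ u c` is nondecreasing, every word
that ends up on a factor `f c` is nondecreasing too. -/
lemma abs_wDeriv_prod_le {d l : ℕ} {r : ℕ∞} {U : Set (Fin d → ℝ)} (hU : IsOpen U)
    {f : Fin l → (Fin d → ℝ) → ℝ} {K A C : ℝ} (hK : 0 ≤ K) (hA : 0 ≤ A) (hC : 0 ≤ C)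
    (hf : ∀ c, ContDiffOn ℝ r (f c) U) {x : Fin d → ℝ} (hx : x ∈ U) (hpos : ∀ i, 0 < x i)
    (hb : ∀ c (v : List (Fin d)), v.Pairwise (· ≤ ·) → (v.length : ℕ∞) ≤ r →
      |wDeriv U v (f c) x| ≤
        K * A ^ v.length * (v.length.factorial : ℝ) ^ (C + 1) / (v.map x).prod)
    (w : List (Fin d)) (u : Fin l → List (Fin d))
    (hs : ∀ c, (w ++ u c).Pairwise (· ≤ ·))
    (hr : ((w.length + ∑ c, (u c).length : ℕ) : ℕ∞) ≤ r) :
    |wDeriv U w (fun y => ∏ c, wDeriv U (u c) (f c) y) x| ≤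
      (l : ℝ) ^ w.length *
        (K ^ l * A ^ (w.length + ∑ c, (u c).length) *
          ((w.length + ∑ c, (u c).length).factorial : ℝ) ^ (C + 1) /
            ((w.map x).prod * ∏ c, ((u c).map x).prod)) := by
  have hle : ∀ (u : Fin l → List (Fin d)) (c : Fin l), (u c).length ≤ ∑ c, (u c).length :=
    fun u c => Finset.single_le_sum (f := fun c => (u c).length) (by simp) (Finset.mem_univ c)
  -- The order budget `r` leaves each factor with the `k` derivatives still to be taken.
  have hsm : ∀ (k : ℕ) (u : Fin l → List (Fin d)),
      ((k + ∑ c, (u c).length : ℕ) : ℕ∞) ≤ r → ∀ c,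
      ContDiffOn ℝ k (wDeriv U (u c) (f c)) U := by
    intro k u h c
    refine wDeriv_contDiffOn hU _ ((hf c).of_le ?_)
    have : ((k + (u c).length : ℕ) : ℕ∞) ≤ r :=
      le_trans (by exact_mod_cast Nat.add_le_add_left (hle u c) k) h
    exact_mod_cast this
  induction w using List.reverseRecOn generalizing u with
  | nil =>
    simp only [wDeriv, List.length_nil, List.map_nil, List.prod_nil, pow_zero, one_mul, zero_add,
      List.nil_append] at hs hr ⊢
    refine prod_mild_le hK hA hC (fun c => (u c).length) (fun c => ((u c).map x).prod) _ ?_ ?_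
    · intro c
      exact List.prod_pos (by simp only [List.mem_map]; rintro _ ⟨i, _, rfl⟩; exact hpos i)
    · intro c
      exact hb c (u c) (hs c) (le_trans (by exact_mod_cast hle u c) hr)
  | append_singleton w i ih =>
    have hup : ∀ c, w.length + ∑ b, (Function.update u c (i :: u c) b).length
        = (w ++ [i]).length + ∑ b, (u b).length := by
      intro c
      rw [sum_length_update, List.length_append, List.length_singleton]
      omega
    have hone : ((1 + ∑ c, (u c).length : ℕ) : ℕ∞) ≤ r :=
      le_trans (by norm_cast; simp) hr
    have hstep : EqOn (wDeriv U [i] fun y => ∏ c, wDeriv U (u c) (f c) y)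
        (fun y => ∑ c, ∏ b, wDeriv U (Function.update u c (i :: u c) b) (f b) y) U :=
      fun y hy => fderivWithin_prod_wDeriv hU f u i hy fun c =>
        (hsm 1 u hone c).differentiableOn (by simp) y hy
    rw [wDeriv_append, wDeriv_congr w hstep hx, wDeriv_sum hU w Finset.univ ?_ hx]
    · refine (Finset.abs_sum_le_sum_abs _ _).trans ?_
      have hterm : ∀ c ∈ Finset.univ, _ := fun c (_ : c ∈ Finset.univ) =>
        ih (Function.update u c (i :: u c)) (fun b => by
          have h := hs b
          rcases eq_or_ne b c with rfl | hbc
          · simpa using h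
          · rw [Function.update_of_ne hbc]
            exact h.sublist ((List.sublist_append_left w [i]).append_right _)) (by
          rw [hup]; exact hr)
      refine (Finset.sum_le_sum hterm).trans (le_of_eq ?_)
      simp only [hup, prod_prod_update, Finset.sum_const, Finset.card_univ, Fintype.card_fin,
        nsmul_eq_mul]
      simp only [List.length_append, List.length_singleton, List.map_append, List.prod_append,
        List.map_cons, List.map_nil, List.prod_singleton, mul_assoc, pow_succ']
    · intro c _
      refine contDiffOn_prod fun b _ => hsm _ _ ?_ b
      rw [hup]; exact hr

/-- the product of `l` functions that are weakly `(A,B,C)`-mild up to order `r`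
is weakly `(lA, B^l, C)`-mild up to order `r`. -/
theorem weaklyMild_prod {d : ℕ} (r : ℕ∞) (hr : 1 ≤ r)
    (U : Set (Fin d → ℝ)) (hU : IsOpen U) (hUsub : U ⊆ {x | ∀ i, x i ∈ Ioo (0 : ℝ) 1})
    (l : ℕ) (f : Fin l → (Fin d → ℝ) → ℝ)
    (A B C : ℝ) (hA : 0 < A) (hB : 0 < B) (hC : 0 ≤ C)
    (hf : ∀ i : Fin l, WeaklyMildUpTo r U (f i) A B C) :
    WeaklyMildUpTo r U (fun x => ∏ i, f i x) (l * A) (B ^ l) C := by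
  have hnat : ∀ ν : Fin d → ℕ, (∑ i, ν i : ℕ∞) ≤ r → ((∑ i, ν i : ℕ) : ℕ∞) ≤ r := by
    intro ν h
    exact_mod_cast h
  have hcd : ∀ (g : (Fin d → ℝ) → ℝ) (n : ℕ), ContDiffOn ℝ r g U → (n : ℕ∞) ≤ r →
      ContDiffOn ℝ n g U := fun g n hg h => hg.of_le (by exact_mod_cast h)
  have hprod : ContDiffOn ℝ r (fun x => ∏ i, f i x) U := contDiffOn_prod fun c _ => (hf c).1
  refine ⟨hprod, fun ν hν x hx => ?_⟩
  rw [pderivW_eq_wDeriv hU ν (hcd _ _ hprod (hnat ν hν)) hx]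
  have hb : ∀ c (v : List (Fin d)), v.Pairwise (· ≤ ·) → (v.length : ℕ∞) ≤ r →
      |wDeriv U v (f c) x| ≤
        B ^ (C + 1) * A ^ v.length * (v.length.factorial : ℝ) ^ (C + 1) / (v.map x).prod := by
    intro c v hv hvr
    have hlen : ∑ i, v.count i = v.length := by
      rw [← length_mWord, mWord_count hv]
    have h := (hf c).2 (fun i => v.count i)
      (by rw [← hlen] at hvr; exact_mod_cast hvr) x hx
    rwa [pderivW_eq_wDeriv hU _ (hcd _ _ (hf c).1 (by rw [hlen]; exact hvr)) hx, hlen,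
      ← prod_mWord, mWord_count hv] at h
  have h := abs_wDeriv_prod_le hU (by positivity : 0 ≤ B ^ (C + 1)) hA.le hC (fun c => (hf c).1) hx
    (fun i => (hUsub hx i).1) hb (mWord ν) (fun _ => [])
    (fun _ => by simpa using mWord_pairwise ν) (by simpa [length_mWord] using hν)
  simp only [wDeriv, List.length_nil, Finset.sum_const_zero, add_zero, List.map_nil, List.prod_nil,
    Finset.prod_const_one, mul_one, length_mWord, prod_mWord] at h
  refine h.trans (le_of_eq ?_)
  have hBl : (B ^ l) ^ (C + 1) = (B ^ (C + 1)) ^ l := by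
    rw [← Real.rpow_natCast, ← Real.rpow_natCast, ← Real.rpow_mul hB.le, ← Real.rpow_mul hB.le,
      mul_comm]
  rw [hBl, mul_pow]
  ring
end
end
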